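/- arXiv:2202.03431 — 2 statements merged into one kernel-verified Lean document; each statement's English description precedes it below -/
import Mathlib

section
/- There is no universal constant α such that τ(G) ≤ χ_ℓ(G) + α for every finite simple graph G; that is, for every real α there exists a finite simple graph G with τ(G) - χ_ℓ(G) > α. -/
/-- A proper coloring of the graph `G` from the list assignment `L` (colors are
natural numbers): every vertex gets a color from its list, and adjacent vertices
get different colors. -/
def IsProperListColoring {V : Type*} (G : SimpleGraph V) (L : V → Finset ℕ) (f : V → ℕ) : Prop :=
  (∀ v, f v ∈ L v) ∧ ∀ ⦃u w⦄, G.Adj u w → f u ≠ f w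

/-- `P(G, L)`: the number of proper `L`-colorings of `G`. -/
noncomputable def numListColorings {V : Type*} (G : SimpleGraph V) (L : V → Finset ℕ) : ℕ :=
  {f : V → ℕ | IsProperListColoring G L f}.ncard

/-- `P(G, m)`: the chromatic polynomial of `G` evaluated at `m`, i.e. the number of
proper colorings of `G` using colors from `{1, …, m}`. -/
noncomputable def chromPoly {V : Type*} (G : SimpleGraph V) (m : ℕ) : ℕ :=
  numListColorings G fun _ => Finset.Icc 1 m

/-- `L` is an `m`-assignment: every list has size `m`. -/
def IsAssignment {V : Type*} (L : V → Finset ℕ) (m : ℕ) : Prop :=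
  ∀ v, (L v).card = m

/-- `P_ℓ(G, m)`: the list color function, the minimum of `P(G, L)` over all
`m`-assignments `L` for `G`. -/
noncomputable def listColorFunction {V : Type*} (G : SimpleGraph V) (m : ℕ) : ℕ :=
  sInf {p | ∃ L : V → Finset ℕ, IsAssignment L m ∧ numListColorings G L = p}

/-- `χ(G)`: the chromatic number, the least `m` admitting a proper coloring with
colors from `{1, …, m}`. -/
noncomputable def chromNum {V : Type*} (G : SimpleGraph V) : ℕ :=
  sInf {m | 0 < chromPoly G m}

/-- `χ_ℓ(G)`: the list chromatic number, the least `k` such that `G` has a proper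
`L`-coloring for every `k`-assignment `L`. -/
noncomputable def listChromNum {V : Type*} (G : SimpleGraph V) : ℕ :=
  sInf {k | ∀ L : V → Finset ℕ, IsAssignment L k → ∃ f, IsProperListColoring G L f}

/-- `τ(G)`: the list color function threshold, the least `k ≥ χ(G)` such that
`P_ℓ(G, m) = P(G, m)` whenever `m ≥ k`. -/
noncomputable def lcfThreshold {V : Type*} (G : SimpleGraph V) : ℕ :=
  sInf {k | chromNum G ≤ k ∧ ∀ m, k ≤ m → listColorFunction G m = chromPoly G m}

/-- The complete bipartite graph `K_{2,l}`. -/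
def K2l (l : ℕ) : SimpleGraph (Fin 2 ⊕ Fin l) := completeBipartiteGraph (Fin 2) (Fin l)

/-!
The graphs are `K_{2,4t}`. Their list chromatic number is at most `3`: after the two vertices on
the left are colored, every vertex on the right still has a color to spare. The threshold, on the
other hand, exceeds any given even number `m = 2k` once `t` is large. Let the two left lists be
disjoint and split each into two blocks of `k` colors; let the right lists be the four unions of
one block from either side, each used `t` times. Every coloring of the left side then leaves
`m - 2`, `m - 1`, `m - 1` and `m` colors on the four kinds of right vertices, so there are
`m² ((m - 2) (m - 1)² m)ᵗ` list colorings, whereas giving the left vertices the same color already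
produces `m (m - 1)⁴ᵗ` proper `m`-colorings. Since `(m - 2) m < (m - 1)²`, the latter number wins.

For this to bound the threshold from below, some threshold must exist (a theorem of Donner); here
every `m ≥ 2 ^ (|E| + 1)` will do. Expand `P(G, L)` and `P(G, m)` by
inclusion-exclusion over edge subsets `A`, and let `Γ` be the sum over all edges `uv` of the sizes
of `L u ∆ L v`. The subsets with one edge contribute exactly `Γ mⁿ⁻² / 2` to `P(G, L) - P(G, m)`,
where `n = |V|`. A subset with at least two edges leaves at most `n - 2` components, and a coloring
of the components fails to come from the lists only if the lists disagree along some edge of `A`;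
hence each of these fewer than `2 ^ |E|` subsets contributes at least `-Γ mⁿ⁻³`.
-/

section EdgeSubsetExpansion

open Finset SimpleGraph

variable {V : Type*}

/-- The number of `L`-colorings, proper or not, that agree on the two ends of every edge of
`H`. These are the terms of the inclusion-exclusion over edge subsets. -/
noncomputable def numMonochromaticColorings (H : SimpleGraph V) (L : V → Finset ℕ) : ℕ :=
  {f : V → ℕ | (∀ v, f v ∈ L v) ∧ ∀ ⦃u v⦄, H.Adj u v → f u = f v}.ncard

theorem numListColorings_eq_card_filter [Fintype V] [DecidableEq V] (G : SimpleGraph V)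
    [Fintype G.edgeSet] (L : V → Finset ℕ) :
    numListColorings G L =
      #{f ∈ Fintype.piFinset L | ∀ e ∈ G.edgeFinset, ¬ (e.map f).IsDiag} := by
  rw [numListColorings, ← Set.ncard_coe_finset]
  congr 1
  ext f
  simp [IsProperListColoring, Sym2.forall]

theorem numMonochromaticColorings_fromEdgeSet [Fintype V] [DecidableEq V] (A : Finset (Sym2 V))
    (L : V → Finset ℕ) :
    numMonochromaticColorings (fromEdgeSet (A : Set (Sym2 V))) L =
      #{f ∈ Fintype.piFinset L | ∀ e ∈ A, (e.map f).IsDiag} := by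
  rw [numMonochromaticColorings, ← Set.ncard_coe_finset]
  congr 1
  ext f
  have eq_of_mem_iff (u v : V) :
      (s(u, v) ∈ A → ¬u = v → f u = f v) ↔ (s(u, v) ∈ A → f u = f v) := by
    by_cases huv : u = v <;> simp [huv]
  simp [Sym2.forall, eq_of_mem_iff]

theorem numListColorings_eq_sum_powerset_edgeFinset [Finite V] (G : SimpleGraph V)
    [Fintype G.edgeSet] (L : V → Finset ℕ) :
    (numListColorings G L : ℤ) =
      ∑ A ∈ G.edgeFinset.powerset,
        (-1) ^ #A * (numMonochromaticColorings (fromEdgeSet (A : Set (Sym2 V))) L : ℤ) := by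
  classical
  have := Fintype.ofFinite V
  have indicator_expansion (f : V → ℕ) :
      (if ∀ e ∈ G.edgeFinset, ¬ (e.map f).IsDiag then (1 : ℤ) else 0) =
        ∑ A ∈ G.edgeFinset.powerset,
          (-1) ^ #A * if ∀ e ∈ A, (e.map f).IsDiag then (1 : ℤ) else 0 := by
    calc _ = ∏ e ∈ G.edgeFinset, if ¬ (e.map f).IsDiag then (1 : ℤ) else 0 := by
          rw [prod_boole]; congr
      _ = ∏ e ∈ G.edgeFinset, (1 + -if (e.map f).IsDiag then (1 : ℤ) else 0) :=
          prod_congr rfl fun e _ => by split_ifs <;> simp_all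
      _ = _ := by
          simp only [prod_one_add, prod_neg, prod_boole]
          congr!
  simp only [numListColorings_eq_card_filter, numMonochromaticColorings_fromEdgeSet, card_filter,
    Nat.cast_sum, Nat.cast_ite, Nat.cast_one, Nat.cast_zero, indicator_expansion, mul_sum]
  exact sum_comm

/-- The colorings of the components of `H` that respect the lists of all vertices: the
monochromatic `L`-colorings, seen as functions on components. -/
def componentColorings (H : SimpleGraph V) (L : V → Finset ℕ) : Set (H.ConnectedComponent → ℕ) :=
  {g | ∀ v, g (H.connectedComponentMk v) ∈ L v}

theorem numMonochromaticColorings_eq_ncard_componentColorings (H : SimpleGraph V)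
    (L : V → Finset ℕ) :
    numMonochromaticColorings H L = (componentColorings H L).ncard := by
  have mk_injective : Function.Injective
      fun (g : H.ConnectedComponent → ℕ) (v : V) => g (H.connectedComponentMk v) :=
    Function.Surjective.injective_comp_right Quot.mk_surjective
  rw [numMonochromaticColorings, ← Set.ncard_image_of_injective _ mk_injective]
  congr 1
  ext f
  constructor
  · rintro ⟨hfL, hf⟩
    have constant_along_walk (u v : V) (p : H.Walk u v) : f u = f v := by
      induction p with
      | nil => rfl
      | cons h _ ih => exact (hf h).trans ih
    exact ⟨ConnectedComponent.lift f fun u v p _ => constant_along_walk u v p, hfL, rfl⟩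
  · rintro ⟨g, hg, rfl⟩
    exact ⟨hg, fun u v huv => congrArg g (ConnectedComponent.sound huv.reachable)⟩

theorem numMonochromaticColorings_const [Finite V] (H : SimpleGraph V) (s : Finset ℕ) :
    (numMonochromaticColorings H fun _ => s) = #s ^ Nat.card H.ConnectedComponent := by
  classical
  have := Fintype.ofFinite V
  have coe_piFinset : componentColorings H (fun _ => s) =
      Fintype.piFinset fun _ : H.ConnectedComponent => s := by
    ext g
    simp [componentColorings, ConnectedComponent.forall]
  rw [numMonochromaticColorings_eq_ncard_componentColorings, coe_piFinset, Set.ncard_coe_finset,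
    Fintype.card_piFinset, prod_const, card_univ, Nat.card_eq_fintype_card]

end EdgeSubsetExpansion

section ComponentCount

open Finset SimpleGraph

variable {V : Type*} [Finite V] {H : SimpleGraph V}

theorem card_connectedComponent_add_card_le {s : Finset V}
    (hs : ∀ v ∈ s, ∃ w ∉ s, H.Reachable v w) :
    Nat.card H.ConnectedComponent + #s ≤ Nat.card V := by
  classical
  have := Fintype.ofFinite V
  have mk_surjOn : Set.SurjOn H.connectedComponentMk ↑sᶜ ↑(univ : Finset H.ConnectedComponent) := by
    intro c _
    induction c using ConnectedComponent.ind with | _ v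
    by_cases hv : v ∈ s
    · obtain ⟨w, hw, hvw⟩ := hs v hv
      exact ⟨w, by simpa using hw, ConnectedComponent.sound hvw.symm⟩
    · exact ⟨v, by simpa using hv, rfl⟩
  have card_le := card_le_card_of_surjOn _ mk_surjOn
  rw [card_univ, card_compl] at card_le
  have := card_le_univ s
  rw [Nat.card_eq_fintype_card, Nat.card_eq_fintype_card]
  omega

theorem card_connectedComponent_add_two_le {e e' : Sym2 V} (he : e ∈ H.edgeSet)
    (he' : e' ∈ H.edgeSet) (hne : e ≠ e') : Nat.card H.ConnectedComponent + 2 ≤ Nat.card V := by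
  classical
  obtain ⟨d, hd', hd⟩ : ∃ d ∈ e', d ∉ e := by
    by_contra! h
    induction e' with | _ x y
    exact hne ((Sym2.mem_and_mem_iff he'.ne).1 ⟨h x (by simp), h y (by simp)⟩)
  obtain ⟨c, rfl⟩ := hd'
  obtain ⟨a, ha, hac⟩ : ∃ a ∈ e, a ≠ c := by
    by_contra! h
    induction e with | _ x y
    exact he.ne ((h x (by simp)).trans (h y (by simp)).symm)
  obtain ⟨b, rfl⟩ := ha
  have had : a ≠ d := fun h => hd (by simp [h])
  have hbd : b ≠ d := fun h => hd (by simp [h])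
  rw [← card_pair had]
  refine card_connectedComponent_add_card_le fun v hv => ?_
  obtain rfl | rfl : v = a ∨ v = d := by simpa using hv
  · exact ⟨b, by simp [hbd, he.ne.symm], he.reachable⟩
  · exact ⟨c, by simp [hac.symm, he'.ne.symm], he'.reachable⟩

end ComponentCount

section ListGap

open Finset SimpleGraph

variable {V : Type*} {m : ℕ} {L : V → Finset ℕ}

/-- The number of colors on which the lists at the two ends of an edge disagree. -/
def listGap (L : V → Finset ℕ) : Sym2 V → ℕ :=
  Sym2.lift ⟨fun u v => #(symmDiff (L u) (L v)), fun u v => by simp only [symmDiff_comm]⟩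

theorem listGap_mk (L : V → Finset ℕ) (u v : V) : listGap L s(u, v) = #(symmDiff (L u) (L v)) :=
  rfl

theorem listGap_add_two_mul_card_inter (hL : IsAssignment L m) (u v : V) :
    listGap L s(u, v) + 2 * #(L u ∩ L v) = 2 * m := by
  have card_u := card_sdiff_add_card_inter (L u) (L v)
  have card_v := card_sdiff_add_card_inter (L v) (L u)
  rw [hL] at card_u card_v
  rw [inter_comm] at card_v
  rw [listGap_mk, symmDiff_def, sup_eq_union, card_union_of_disjoint disjoint_sdiff_sdiff]
  omega

theorem card_mul_card_piFinset_update {ι α : Type*} [Fintype ι] [DecidableEq ι]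
    (s : ι → Finset α) (i : ι) (t : Finset α) :
    #(s i) * #(Fintype.piFinset (Function.update s i t)) = #t * #(Fintype.piFinset s) := by
  rw [Fintype.card_piFinset, Fintype.card_piFinset, Fintype.prod_eq_mul_prod_compl i,
    Fintype.prod_eq_mul_prod_compl i fun j => #(s j), Function.update_self, mul_left_comm]
  congr 2
  refine prod_congr rfl fun j hj => ?_
  rw [Function.update_of_ne (by simpa using hj)]

theorem numMonochromaticColorings_fromEdgeSet_singleton [Fintype V] [DecidableEq V]
    (L : V → Finset ℕ) {u v : V} (huv : u ≠ v) :
    numMonochromaticColorings (fromEdgeSet {s(u, v)}) L =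
      #(L u ∩ L v) * ∏ w ∈ {u, v}ᶜ, #(L w) := by
  let mono : Finset (V → ℕ) := {f ∈ Fintype.piFinset L | f u = f v}
  let L₀ := Function.update (Function.update L u (L u ∩ L v)) v {0}
  have count_eq : numMonochromaticColorings (fromEdgeSet {s(u, v)}) L = #mono := by
    simpa using numMonochromaticColorings_fromEdgeSet {s(u, v)} L
  have card_L₀ : #(Fintype.piFinset L₀) = #(L u ∩ L v) * ∏ w ∈ {u, v}ᶜ, #(L w) := by
    rw [Fintype.card_piFinset, ← prod_mul_prod_compl {u, v}, prod_pair huv]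
    congr 1
    · simp [L₀, huv]
    · exact prod_congr rfl fun w hw => by simp_all [L₀]
  have mem_mono (f : V → ℕ) : f ∈ mono ↔ (∀ w, f w ∈ L w) ∧ f u = f v := by simp [mono]
  have mem_L₀ (g : V → ℕ) : g ∈ Fintype.piFinset L₀ ↔
      g v = 0 ∧ g u ∈ L u ∩ L v ∧ ∀ w, w ≠ u → w ≠ v → g w ∈ L w := by
    simp only [Fintype.mem_piFinset, L₀, Function.update_apply]
    grind
  rw [count_eq, ← card_L₀]
  -- The color at `v` is redundant: overwrite it by `0` and recover it from the color at `u`.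
  refine card_nbij' (fun f => Function.update f v 0) (fun g => Function.update g v (g u))
    (fun f hf => ?_) (fun g hg => ?_) (fun f hf => ?_) (fun g hg => ?_)
  · rw [mem_coe, mem_mono] at hf
    rw [mem_coe, mem_L₀]
    grind
  · rw [mem_coe, mem_L₀] at hg
    rw [mem_coe, mem_mono]
    grind
  · rw [mem_coe, mem_mono] at hf
    simp [huv, hf.2]
  · rw [mem_coe, mem_L₀] at hg
    simp [← hg.1]

theorem two_mul_numMonochromaticColorings_fromEdgeSet_singleton [Finite V]
    (hL : IsAssignment L m) {s : Finset ℕ} (hs : #s = m) {e : Sym2 V} (he : ¬ e.IsDiag) :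
    2 * numMonochromaticColorings (fromEdgeSet {e}) (fun _ => s) =
      2 * numMonochromaticColorings (fromEdgeSet {e}) L +
        m ^ (Nat.card V - 2) * listGap L e := by
  classical
  have := Fintype.ofFinite V
  induction e with | _ u v
  have huv : u ≠ v := by simpa using he
  have card_compl_pair : #({u, v}ᶜ : Finset V) = Nat.card V - 2 := by
    rw [card_compl, card_pair huv, Nat.card_eq_fintype_card]
  have hgap := listGap_add_two_mul_card_inter hL u v
  simp only [numMonochromaticColorings_fromEdgeSet_singleton _ huv, inter_self, hs, hL _,
    prod_const, card_compl_pair]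
  calc 2 * (m * m ^ (Nat.card V - 2)) = m ^ (Nat.card V - 2) * (2 * m) := by ring
    _ = _ := by rw [← hgap]; ring

variable {H : SimpleGraph V}

/-- The colorings of the components of `H` that respect the list of one chosen representative of
each component. -/
def representativeColorings (H : SimpleGraph V) (L : V → Finset ℕ) :
    Set (H.ConnectedComponent → ℕ) :=
  {g | ∀ c, g c ∈ L c.out}

/-- The representative colorings whose color on the edge `e` of `H` lies in only one of the lists
at its two ends. -/
def disagreeingColorings (H : SimpleGraph V) (L : V → Finset ℕ) (e : Sym2 V) :
    Set (H.ConnectedComponent → ℕ) :=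
  {g ∈ representativeColorings H L | ∃ u v, s(u, v) = e ∧
    g (H.connectedComponentMk u) ∈ symmDiff (L u) (L v)}

theorem connectedComponentMk_out (c : H.ConnectedComponent) : H.connectedComponentMk c.out = c :=
  Quot.out_eq c

theorem exists_adj_mem_symmDiff {g : H.ConnectedComponent → ℕ}
    (hg : g ∈ representativeColorings H L) {v : V} (hv : g (H.connectedComponentMk v) ∉ L v) :
    ∃ u w, H.Adj u w ∧ g (H.connectedComponentMk u) ∈ symmDiff (L u) (L w) := by
  obtain ⟨p⟩ : H.Reachable (H.connectedComponentMk v).out v :=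
    ConnectedComponent.exact (Quot.out_eq _)
  obtain ⟨d, -, hfst, hsnd⟩ := p.exists_boundary_dart {u | g (H.connectedComponentMk u) ∈ L u}
    (by simpa only [Set.mem_ofPred_eq, connectedComponentMk_out] using hg _) hv
  have hmk : H.connectedComponentMk d.fst = H.connectedComponentMk d.snd :=
    ConnectedComponent.sound d.adj.reachable
  refine ⟨d.fst, d.snd, d.adj, mem_symmDiff.2 (.inl ⟨hfst, ?_⟩)⟩
  rwa [hmk]

theorem componentColorings_subset_representativeColorings (H : SimpleGraph V)
    (L : V → Finset ℕ) : componentColorings H L ⊆ representativeColorings H L := fun g hg c => by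
  simpa only [connectedComponentMk_out] using hg c.out

theorem representativeColorings_subset_union (H : SimpleGraph V) [Fintype H.edgeSet]
    (L : V → Finset ℕ) :
    representativeColorings H L ⊆
      componentColorings H L ∪ ⋃ e ∈ H.edgeFinset, disagreeingColorings H L e := by
  intro g hg
  by_cases hmono : g ∈ componentColorings H L
  · exact .inl hmono
  · obtain ⟨v, hv⟩ := not_forall.1 hmono
    obtain ⟨u, w, huw, hgu⟩ := exists_adj_mem_symmDiff hg hv
    exact .inr <| Set.mem_biUnion (mem_edgeFinset.2 huw) ⟨hg, u, w, rfl, hgu⟩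

section Finite

variable [Finite V] {G : SimpleGraph V} {s : Finset ℕ}

theorem ncard_representativeColorings (hL : IsAssignment L m) :
    (representativeColorings H L).ncard = m ^ Nat.card H.ConnectedComponent := by
  classical
  have := Fintype.ofFinite V
  have coe_piFinset : representativeColorings H L =
      Fintype.piFinset fun c : H.ConnectedComponent => L c.out := by
    ext g
    simp [representativeColorings]
  rw [coe_piFinset, Set.ncard_coe_finset, Fintype.card_piFinset]
  simp [hL _]

theorem finite_representativeColorings (H : SimpleGraph V) (L : V → Finset ℕ) :
    (representativeColorings H L).Finite :=
  have := Fintype.ofFinite V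
  Set.Finite.pi' fun c => (L c.out).finite_toSet

theorem numMonochromaticColorings_le (hL : IsAssignment L m) :
    numMonochromaticColorings H L ≤ m ^ Nat.card H.ConnectedComponent := by
  rw [numMonochromaticColorings_eq_ncard_componentColorings, ← ncard_representativeColorings hL]
  exact Set.ncard_le_ncard (componentColorings_subset_representativeColorings H L)
    (finite_representativeColorings H L)

theorem mul_ncard_disagreeingColorings_le (hL : IsAssignment L m) {e : Sym2 V}
    (he : e ∈ H.edgeSet) :
    m * (disagreeingColorings H L e).ncard ≤
      m ^ Nat.card H.ConnectedComponent * listGap L e := by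
  classical
  have := Fintype.ofFinite V
  induction e with | _ u v
  let R : H.ConnectedComponent → Finset ℕ := fun c => L c.out
  let R₀ := Function.update R (H.connectedComponentMk u) (symmDiff (L u) (L v))
  have hmk : H.connectedComponentMk u = H.connectedComponentMk v :=
    ConnectedComponent.sound (Adj.reachable he)
  have disagreeing_subset : disagreeingColorings H L s(u, v) ⊆ Fintype.piFinset R₀ := by
    rintro g ⟨hg, x, y, hxy, hgx⟩
    have hgu : g (H.connectedComponentMk u) ∈ symmDiff (L u) (L v) := by
      obtain ⟨rfl, rfl⟩ | ⟨rfl, rfl⟩ := Sym2.eq_iff.1 hxy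
      · exact hgx
      · rwa [hmk, symmDiff_comm]
    refine mem_coe.2 <| Fintype.mem_piFinset.2 fun c => ?_
    obtain rfl | hc := eq_or_ne c (H.connectedComponentMk u)
    · simpa [R₀] using hgu
    · simpa [R₀, hc] using hg c
  have card_R₀ : m * #(Fintype.piFinset R₀) =
      listGap L s(u, v) * m ^ Nat.card H.ConnectedComponent := by
    have := card_mul_card_piFinset_update R (H.connectedComponentMk u) (symmDiff (L u) (L v))
    simpa [R, Fintype.card_piFinset, hL _, listGap_mk] using this
  calc _ ≤ m * #(Fintype.piFinset R₀) := by
        gcongr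
        exact (Set.ncard_le_ncard disagreeing_subset).trans_eq (Set.ncard_coe_finset _)
    _ = _ := by rw [card_R₀, mul_comm]

theorem mul_pow_card_connectedComponent_le [Fintype H.edgeSet] (hL : IsAssignment L m) :
    m * m ^ Nat.card H.ConnectedComponent ≤
      m * numMonochromaticColorings H L +
        m ^ Nat.card H.ConnectedComponent * ∑ e ∈ H.edgeFinset, listGap L e := by
  have union_finite :
      (componentColorings H L ∪ ⋃ e ∈ H.edgeFinset, disagreeingColorings H L e).Finite :=
    (finite_representativeColorings H L).subset <| Set.union_subset
      (componentColorings_subset_representativeColorings H L)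
      (Set.iUnion₂_subset fun _ _ => Set.sep_subset _ _)
  calc m * m ^ Nat.card H.ConnectedComponent
      = m * (representativeColorings H L).ncard := by rw [ncard_representativeColorings hL]
    _ ≤ m * ((componentColorings H L).ncard +
          ∑ e ∈ H.edgeFinset, (disagreeingColorings H L e).ncard) := by
        gcongr
        refine (Set.ncard_le_ncard (representativeColorings_subset_union H L) union_finite).trans
          <| (Set.ncard_union_le _ _).trans ?_
        gcongr
        exact set_ncard_biUnion_le _ _
    _ = m * numMonochromaticColorings H L +
          ∑ e ∈ H.edgeFinset, m * (disagreeingColorings H L e).ncard := by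
        rw [numMonochromaticColorings_eq_ncard_componentColorings, mul_add, mul_sum]
    _ ≤ m * numMonochromaticColorings H L +
          ∑ e ∈ H.edgeFinset, m ^ Nat.card H.ConnectedComponent * listGap L e :=
        Nat.add_le_add_left (sum_le_sum fun e he =>
          mul_ncard_disagreeingColorings_le hL (mem_edgeFinset.1 he)) _
    _ = _ := by rw [mul_sum]

theorem mul_pow_card_connectedComponent_le_of_card_edgeFinset_ne_one [Fintype H.edgeSet]
    (hL : IsAssignment L m) (hm : 0 < m) (hH : #H.edgeFinset ≠ 1) :
    m * m ^ Nat.card H.ConnectedComponent ≤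
      m * numMonochromaticColorings H L +
        m ^ (Nat.card V - 2) * ∑ e ∈ H.edgeFinset, listGap L e := by
  refine (mul_pow_card_connectedComponent_le hL).trans (Nat.add_le_add_left ?_ _)
  obtain hempty | hnontrivial : H.edgeFinset = ∅ ∨ H.edgeFinset.Nontrivial := by
    rw [← one_lt_card_iff_nontrivial, ← card_eq_zero]
    omega
  · simp [hempty]
  · obtain ⟨e, he, e', he', hne⟩ := hnontrivial
    have hcomp : Nat.card H.ConnectedComponent + 2 ≤ Nat.card V :=
      card_connectedComponent_add_two_le (mem_edgeFinset.1 he) (mem_edgeFinset.1 he') hne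
    gcongr
    omega

-- Scaled by `2 * m` to clear the denominators of `Γ mⁿ⁻² / 2` and `Γ mⁿ⁻³`.
theorem le_neg_one_pow_mul_numMonochromaticColorings_sub [Fintype G.edgeSet]
    (hL : IsAssignment L m) (hs : #s = m) (hm : 0 < m) {A : Finset (Sym2 V)}
    (hA : A ⊆ G.edgeFinset) :
    (if #A = 1 then (m * m ^ (Nat.card V - 2) * ∑ e ∈ A, listGap L e : ℤ) else 0) -
        2 * (m ^ (Nat.card V - 2) * ∑ e ∈ G.edgeFinset, listGap L e) ≤
      2 * m * ((-1) ^ #A * (numMonochromaticColorings (fromEdgeSet (A : Set (Sym2 V))) L -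
        numMonochromaticColorings (fromEdgeSet (A : Set (Sym2 V))) fun _ => s)) := by
  classical
  have := Fintype.ofFinite V
  have hnonneg : (0 : ℤ) ≤ m ^ (Nat.card V - 2) * ∑ e ∈ G.edgeFinset, listGap L e := by positivity
  split_ifs with hcard
  · obtain ⟨e, rfl⟩ := card_eq_one.1 hcard
    have he : ¬ e.IsDiag := G.not_isDiag_of_mem_edgeSet (by simpa using hA)
    have hsingle := two_mul_numMonochromaticColorings_fromEdgeSet_singleton hL hs he
    zify at hsingle
    simp only [coe_singleton, sum_singleton, card_singleton]
    linear_combination 2 * hnonneg - m * hsingle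
  · have edgeFinset_eq : (fromEdgeSet (A : Set (Sym2 V))).edgeFinset = A := by
      ext e
      simpa using fun he => G.not_isDiag_of_mem_edgeSet (mem_edgeFinset.1 (hA he))
    have count_ge := mul_pow_card_connectedComponent_le_of_card_edgeFinset_ne_one
      (H := fromEdgeSet (A : Set (Sym2 V))) hL hm (by rwa [edgeFinset_eq])
    rw [edgeFinset_eq] at count_ge
    have count_le := numMonochromaticColorings_le (H := fromEdgeSet (A : Set (Sym2 V))) hL
    have hsum : ∑ e ∈ A, listGap L e ≤ ∑ e ∈ G.edgeFinset, listGap L e :=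
      sum_le_sum_of_subset hA
    replace hsum := Nat.mul_le_mul_left (m ^ (Nat.card V - 2)) hsum
    replace count_le := Nat.mul_le_mul_left m count_le
    rw [numMonochromaticColorings_const, hs]
    zify at count_ge count_le hsum ⊢
    obtain hsign | hsign := neg_one_pow_eq_or ℤ #A <;> rw [hsign]
    · linear_combination 2 * count_ge + 2 * hsum
    · push_cast at hnonneg
      linear_combination 2 * count_le + 2 * hnonneg

theorem numListColorings_const_le_numListColorings [Fintype G.edgeSet] (hL : IsAssignment L m)
    (hs : #s = m) (hm : 2 ^ (#G.edgeFinset + 1) ≤ m) :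
    numListColorings G (fun _ => s) ≤ numListColorings G L := by
  have hm_pos : 0 < m := lt_of_lt_of_le (by positivity) hm
  set Γ := ∑ e ∈ G.edgeFinset, listGap L e with hΓ
  have sum_singletons : ∑ A ∈ G.edgeFinset.powerset,
      (if #A = 1 then (m * m ^ (Nat.card V - 2) * ∑ e ∈ A, listGap L e : ℤ) else 0) =
        m * m ^ (Nat.card V - 2) * Γ := by
    rw [← sum_filter, ← powersetCard_eq_filter, powersetCard_one, sum_map, hΓ]
    simp [mul_sum]
  have sum_bounds := sum_le_sum fun A (hA : A ∈ G.edgeFinset.powerset) =>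
    le_neg_one_pow_mul_numMonochromaticColorings_sub hL hs hm_pos (mem_powerset.1 hA)
  rw [sum_sub_distrib, sum_singletons, sum_const, card_powerset, ← mul_sum,
    ← hΓ] at sum_bounds
  simp only [mul_sub, sum_sub_distrib, ← numListColorings_eq_sum_powerset_edgeFinset] at sum_bounds
  have gain_nonneg : (0 : ℤ) ≤ m ^ (Nat.card V - 2) * Γ * (m - 2 ^ (#G.edgeFinset + 1)) := by
    have hm_sub : (0 : ℤ) ≤ m - 2 ^ (#G.edgeFinset + 1) := sub_nonneg.2 (by exact_mod_cast hm)
    positivity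
  have mul_sub_nonneg :
      (0 : ℤ) ≤ 2 * m * (numListColorings G L - numListColorings G fun _ => s) := by
    push_cast [nsmul_eq_mul] at sum_bounds
    linear_combination gain_nonneg + sum_bounds
  exact_mod_cast sub_nonneg.1 (nonneg_of_mul_nonneg_right mul_sub_nonneg (by positivity))

end Finite

end ListGap

section Threshold

open Finset SimpleGraph

variable {V : Type*} {G : SimpleGraph V} {m : ℕ}

theorem listColorFunction_le_numListColorings {L : V → Finset ℕ} (hL : IsAssignment L m) :
    listColorFunction G m ≤ numListColorings G L :=
  Nat.sInf_le ⟨L, hL, rfl⟩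

theorem isAssignment_Icc (V : Type*) (m : ℕ) : IsAssignment (fun _ : V => Icc 1 m) m :=
  fun _ => by simp

theorem listColorFunction_eq_chromPoly [Finite V] [Fintype G.edgeSet]
    (hm : 2 ^ (#G.edgeFinset + 1) ≤ m) : listColorFunction G m = chromPoly G m := by
  refine le_antisymm (listColorFunction_le_numListColorings (isAssignment_Icc V m)) ?_
  refine le_csInf ⟨_, _, isAssignment_Icc V m, rfl⟩ ?_
  rintro _ ⟨L, hL, rfl⟩
  exact numListColorings_const_le_numListColorings hL (by simp) hm

-- The `sInf` of an empty set of naturals is `0`: without `listColorFunction_eq_chromPoly` the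
-- threshold could be this junk value.
theorem lt_lcfThreshold_of_listColorFunction_ne [Finite V]
    (h : listColorFunction G m ≠ chromPoly G m) : m < lcfThreshold G := by
  classical
  have := Fintype.ofFinite V
  have threshold_exists :
      {k | chromNum G ≤ k ∧ ∀ m, k ≤ m → listColorFunction G m = chromPoly G m}.Nonempty :=
    ⟨max (chromNum G) (2 ^ (#G.edgeFinset + 1)), le_max_left _ _, fun _ hm =>
      listColorFunction_eq_chromPoly ((le_max_right _ _).trans hm)⟩
  by_contra! hle
  exact h ((Nat.sInf_mem threshold_exists).2 m hle)

end Threshold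

section Iso

open SimpleGraph

variable {V W : Type*} {G : SimpleGraph V} {H : SimpleGraph W}

theorem isProperListColoring_comp_iso (e : G ≃g H) {L : W → Finset ℕ} {f : W → ℕ} :
    IsProperListColoring G (L ∘ e) (f ∘ e) ↔ IsProperListColoring H L f := by
  simp only [IsProperListColoring, Function.comp_apply, ← e.map_adj_iff, e.surjective.forall]

theorem isAssignment_comp_iso (e : G ≃g H) {L : W → Finset ℕ} {m : ℕ} :
    IsAssignment (L ∘ e) m ↔ IsAssignment L m := by
  simp only [IsAssignment, Function.comp_apply, e.surjective.forall]

theorem numListColorings_comp_iso (e : G ≃g H) (L : W → Finset ℕ) :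
    numListColorings G (L ∘ e) = numListColorings H L :=
  (Set.ncard_congr (fun f _ => f ∘ e) (fun _ => (isProperListColoring_comp_iso e).2)
    (fun _ _ _ _ h => e.surjective.injective_comp_right h)
    fun f hf => ⟨f ∘ e.symm, (isProperListColoring_comp_iso e).1
      (by simpa [Function.comp_assoc] using hf), by simp [Function.comp_assoc]⟩).symm

theorem chromPoly_congr (e : G ≃g H) : chromPoly G = chromPoly H :=
  funext fun m => numListColorings_comp_iso e fun _ => Finset.Icc 1 m

theorem listColorFunction_congr (e : G ≃g H) : listColorFunction G = listColorFunction H := by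
  funext m
  simp only [listColorFunction, (e.injective.surjective_comp_right (γ := Finset ℕ)).exists,
    isAssignment_comp_iso, numListColorings_comp_iso]

theorem listChromNum_congr (e : G ≃g H) : listChromNum G = listChromNum H := by
  simp only [listChromNum, (e.injective.surjective_comp_right (γ := Finset ℕ)).forall,
    (e.injective.surjective_comp_right (γ := ℕ)).exists, isAssignment_comp_iso,
    isProperListColoring_comp_iso]

end Iso

section CompleteBipartite

open Finset SimpleGraph

variable {V W : Type*}

theorem isProperListColoring_completeBipartiteGraph {L : V ⊕ W → Finset ℕ} {f : V ⊕ W → ℕ} :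
    IsProperListColoring (completeBipartiteGraph V W) L f ↔
      (∀ v, f (.inl v) ∈ L (.inl v)) ∧
        ∀ w, f (.inr w) ∈ L (.inr w) ∧ ∀ v, f (.inl v) ≠ f (.inr w) := by
  simp only [IsProperListColoring, Sum.forall, completeBipartiteGraph_adj]
  grind

theorem listChromNum_completeBipartiteGraph_le [Fintype V] :
    listChromNum (completeBipartiteGraph V W) ≤ Fintype.card V + 1 := by
  refine Nat.sInf_le fun L hL => ?_
  have list_nonempty (v : V) : (L (.inl v)).Nonempty := card_pos.1 (by simp [hL _])
  choose p hp using list_nonempty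
  have spare_color (w : W) : ∃ c ∈ L (.inr w), c ∉ univ.image p := by
    refine exists_mem_notMem_of_card_lt_card ?_
    rw [hL]
    exact Nat.lt_succ_of_le card_image_le
  choose q hqL hqp using spare_color
  exact ⟨Sum.elim p q, isProperListColoring_completeBipartiteGraph.2
    ⟨hp, fun w => ⟨hqL w, fun v h => hqp w (mem_image.2 ⟨v, mem_univ v, h⟩)⟩⟩⟩

theorem numListColorings_completeBipartiteGraph [Fintype V] [DecidableEq V] [Fintype W]
    (L : V ⊕ W → Finset ℕ) :
    numListColorings (completeBipartiteGraph V W) L =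
      ∑ p ∈ Fintype.piFinset (L ∘ Sum.inl), ∏ w, #(L (.inr w) \ univ.image p) := by
  classical
  simp only [← Fintype.card_piFinset]
  rw [← card_sigma, ← Set.ncard_coe_finset, numListColorings]
  refine Set.ncard_congr (fun f _ => ⟨f ∘ Sum.inl, f ∘ Sum.inr⟩) (fun f hf => ?_)
    (fun f f' _ _ h => ?_) fun pq hpq => ⟨Sum.elim pq.1 pq.2, ?_, rfl⟩
  · simpa [forall_and] using isProperListColoring_completeBipartiteGraph.1 hf
  · obtain ⟨hinl, hinr⟩ := Sigma.mk.inj h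
    exact (Equiv.sumArrowEquivProdArrow V W ℕ).injective (Prod.ext hinl (eq_of_heq hinr))
  · refine isProperListColoring_completeBipartiteGraph.2 ?_
    simpa [forall_and] using hpq

theorem mul_pow_le_chromPoly_completeBipartiteGraph [Finite V] [Nonempty V] [Fintype W] (m : ℕ) :
    m * (m - 1) ^ Fintype.card W ≤ chromPoly (completeBipartiteGraph V W) m := by
  classical
  have := Fintype.ofFinite V
  have const_mem : (Icc 1 m).image (Function.const V) ⊆ Fintype.piFinset fun _ => Icc 1 m :=
    image_subset_iff.2 fun c hc => Fintype.mem_piFinset.2 fun _ => hc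
  have const_term {c : ℕ} (hc : c ∈ Icc 1 m) :
      ∏ _w : W, #(Icc 1 m \ univ.image (Function.const V c)) = (m - 1) ^ Fintype.card W := by
    rw [prod_const, card_univ, show univ.image (Function.const V c) = {c} from
      image_const univ_nonempty c, sdiff_singleton_eq_erase, card_erase_of_mem hc, Nat.card_Icc,
      Nat.add_sub_cancel]
  calc m * (m - 1) ^ Fintype.card W
      = ∑ p ∈ (Icc 1 m).image (Function.const V), ∏ _w : W, #(Icc 1 m \ univ.image p) := by
        rw [sum_image Function.const_injective.injOn, sum_congr rfl fun c hc => const_term hc]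
        simp
    _ ≤ _ := by
        rw [chromPoly, numListColorings_completeBipartiteGraph]
        exact sum_le_sum_of_subset const_mem

end CompleteBipartite

section BlockLists

open Finset SimpleGraph

theorem exists_pairwise_disjoint_card_eq (ι : Type*) [Countable ι] (k : ℕ) :
    ∃ B : ι → Finset ℕ, Pairwise (Function.onFun Disjoint B) ∧ ∀ i, #(B i) = k := by
  obtain ⟨code, hcode⟩ := Countable.exists_injective_nat ι
  refine ⟨fun i => (range k).image (Nat.pair (code i)), fun i j hij => ?_, fun i => ?_⟩
  · refine disjoint_left.2 fun c hci hcj => hij (hcode ?_)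
    obtain ⟨a, -, rfl⟩ := mem_image.1 hci
    obtain ⟨b, -, hab⟩ := mem_image.1 hcj
    exact (Nat.pair_eq_pair.1 hab).1.symm
  · rw [card_image_of_injective _ fun a b hab => (Nat.pair_eq_pair.1 hab).2, card_range]

theorem card_block_sdiff_image {ι κ α : Type*} [Fintype ι] [DecidableEq κ] [DecidableEq α]
    {B : ι × κ → Finset α} (hB : Pairwise (Function.onFun Disjoint B)) {a : ι → κ} {p : ι → α}
    (hp : ∀ u, p u ∈ B (u, a u)) (u : ι) (i : κ) :
    #(B (u, i) \ univ.image p) = if i = a u then #(B (u, i)) - 1 else #(B (u, i)) := by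
  have eq_of_mem {v : ι} (h : p v ∈ B (u, i)) : u = v ∧ i = a v := by
    simpa using hB.eq (not_disjoint_iff.2 ⟨p v, h, hp v⟩)
  split_ifs with hi
  · have sdiff_eq_erase : B (u, i) \ univ.image p = (B (u, i)).erase (p u) := by
      ext c
      simp only [mem_sdiff, mem_image, mem_univ, true_and, mem_erase]
      grind
    rw [sdiff_eq_erase, card_erase_of_mem (hi ▸ hp u)]
  · have disjoint_image : Disjoint (B (u, i)) (univ.image p) := by
      simp only [disjoint_right, forall_mem_image]
      grind
    rw [sdiff_eq_self_of_disjoint disjoint_image]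

variable {B : Fin 2 × Fin 2 → Finset ℕ} {k : ℕ}

/-- The bad lists for `K_{2,4t}`: the left vertex `u` gets the two blocks `B (u, 0)` and
`B (u, 1)`, and each of the four ways to choose one block from either left list is the list of
`t` right vertices. -/
def blockLists (B : Fin 2 × Fin 2 → Finset ℕ) (t : ℕ) :
    Fin 2 ⊕ (Fin 2 × Fin 2 × Fin t) → Finset ℕ :=
  Sum.elim (fun u => B (u, 0) ∪ B (u, 1)) fun w => B (0, w.1) ∪ B (1, w.2.1)

theorem isAssignment_blockLists (hB : Pairwise (Function.onFun Disjoint B))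
    (hcard : ∀ q, #(B q) = k) (t : ℕ) : IsAssignment (blockLists B t) (2 * k) := by
  have card_union {q q' : Fin 2 × Fin 2} (hq : q ≠ q') : #(B q ∪ B q') = 2 * k := by
    rw [card_union_of_disjoint (hB hq), hcard, hcard, two_mul]
  rintro (u | w) <;> exact card_union (by simp)

theorem card_block_union_sdiff_image (hB : Pairwise (Function.onFun Disjoint B))
    (hcard : ∀ q, #(B q) = k) {a : Fin 2 → Fin 2} {p : Fin 2 → ℕ} (hp : ∀ u, p u ∈ B (u, a u))
    (i j : Fin 2) :
    #((B (0, i) ∪ B (1, j)) \ univ.image p) =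
      (if i = a 0 then k - 1 else k) + if j = a 1 then k - 1 else k := by
  have disjoint_blocks : Disjoint (B (0, i) \ univ.image p) (B (1, j) \ univ.image p) :=
    (hB (by simp)).mono sdiff_subset sdiff_subset
  rw [union_sdiff_distrib, card_union_of_disjoint disjoint_blocks, card_block_sdiff_image hB hp,
    card_block_sdiff_image hB hp, hcard, hcard]

theorem numListColorings_blockLists (hB : Pairwise (Function.onFun Disjoint B))
    (hcard : ∀ q, #(B q) = k + 1) (t : ℕ) :
    numListColorings (completeBipartiteGraph (Fin 2) (Fin 2 × Fin 2 × Fin t)) (blockLists B t) =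
      (2 * (k + 1)) ^ 2 * ((2 * k + 1) ^ 2 * (2 * (k + 1) * (2 * k))) ^ t := by
  have card_left : #(Fintype.piFinset (blockLists B t ∘ Sum.inl)) = (2 * (k + 1)) ^ 2 := by
    simp [Fintype.card_piFinset, isAssignment_blockLists hB hcard t _]
  rw [numListColorings_completeBipartiteGraph, ← card_left, ← smul_eq_mul]
  refine sum_eq_card_nsmul fun p hp => ?_
  have exists_block (u : Fin 2) : ∃ i, p u ∈ B (u, i) := by
    simpa [blockLists] using Fintype.mem_piFinset.1 hp u
  choose a ha using exists_block
  have prod_blocks (a b : Fin 2) :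
      ∏ i, ∏ j, ((if i = a then k else k + 1) + if j = b then k else k + 1) =
        (2 * k + 1) ^ 2 * (2 * (k + 1) * (2 * k)) := by
    fin_cases a <;> fin_cases b <;> simp <;> ring
  calc ∏ w, #(blockLists B t (.inr w) \ univ.image p)
      = ∏ i, ∏ j, ∏ _r : Fin t,
          ((if i = a 0 then k else k + 1) + if j = a 1 then k else k + 1) := by
        simp only [Fintype.prod_prod_type]
        exact prod_congr rfl fun i _ => prod_congr rfl fun j _ => prod_congr rfl fun _ _ =>
          card_block_union_sdiff_image hB hcard ha i j
    _ = _ := by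
        simp only [prod_const, card_univ, Fintype.card_fin, prod_pow, prod_blocks]

theorem exists_mul_pow_lt_pow {K : Type*} [Field K] [LinearOrder K] [IsStrictOrderedRing K]
    [Archimedean K] {a b : K} (ha : 0 ≤ a) (hab : a < b) (C : K) :
    ∃ t : ℕ, C * a ^ t < b ^ t := by
  have hb : 0 < b := ha.trans_lt hab
  have hC : 0 < |C| + 1 := by positivity
  obtain ⟨t, ht⟩ := exists_pow_lt_of_lt_one (inv_pos.2 hC) ((div_lt_one hb).2 hab)
  refine ⟨t, ?_⟩
  rw [div_pow, div_lt_iff₀ (pow_pos hb t), lt_inv_mul_iff₀ hC] at ht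
  calc C * a ^ t ≤ (|C| + 1) * a ^ t := by gcongr; linarith [le_abs_self C]
    _ < b ^ t := ht

theorem exists_listColorFunction_lt_chromPoly (k : ℕ) :
    ∃ t : ℕ, listColorFunction (completeBipartiteGraph (Fin 2) (Fin 2 × Fin 2 × Fin t))
        (2 * (k + 1)) <
      chromPoly (completeBipartiteGraph (Fin 2) (Fin 2 × Fin 2 × Fin t)) (2 * (k + 1)) := by
  obtain ⟨B, hB, hcard⟩ := exists_pairwise_disjoint_card_eq (Fin 2 × Fin 2) (k + 1)
  obtain ⟨t, ht⟩ : ∃ t : ℕ,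
      2 * (k + 1) * (2 * (k + 1) * (2 * k)) ^ t < ((2 * k + 1) ^ 2) ^ t := by
    have := exists_mul_pow_lt_pow (K := ℚ) (a := 2 * (k + 1) * (2 * k)) (b := (2 * k + 1) ^ 2)
      (by positivity) (by linarith) (2 * (k + 1))
    exact_mod_cast this
  refine ⟨t, ?_⟩
  calc listColorFunction _ (2 * (k + 1))
      ≤ numListColorings _ (blockLists B t) :=
        listColorFunction_le_numListColorings (isAssignment_blockLists hB hcard t)
    _ = 2 * (k + 1) * ((2 * k + 1) ^ 2) ^ t * (2 * (k + 1) * (2 * (k + 1) * (2 * k)) ^ t) := by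
        rw [numListColorings_blockLists hB hcard, mul_pow _ _ t]
        ring
    _ < 2 * (k + 1) * ((2 * k + 1) ^ 2) ^ t * ((2 * k + 1) ^ 2) ^ t := by
        gcongr
    _ = 2 * (k + 1) * (2 * (k + 1) - 1) ^ Fintype.card (Fin 2 × Fin 2 × Fin t) := by
        rw [show 2 * (k + 1) - 1 = 2 * k + 1 by omega]
        rw [mul_assoc, ← mul_pow, ← pow_add, ← pow_mul]
        simp [← mul_assoc]
    _ ≤ _ := mul_pow_le_chromPoly_completeBipartiteGraph _

end BlockLists

/-- There is no universal constant `α` with `τ(G) ≤ χ_ℓ(G) + α` for every finite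
simple graph `G`: for every real `α` there is a finite simple graph `G` with
`τ(G) - χ_ℓ(G) > α`. -/
theorem no_universal_constant_lcfThreshold_sub_listChromNum :
    ∀ α : ℝ, ∃ (n : ℕ) (G : SimpleGraph (Fin n)),
      (lcfThreshold G : ℝ) - (listChromNum G : ℝ) > α := by
  intro α
  obtain ⟨k, hk⟩ := exists_nat_gt (α + 3)
  obtain ⟨t, ht⟩ := exists_listColorFunction_lt_chromPoly k
  let K := completeBipartiteGraph (Fin 2) (Fin 2 × Fin 2 × Fin t)
  have e : K ≃g K.overFin rfl := K.overFinIso rfl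
  refine ⟨_, K.overFin rfl, ?_⟩
  have hlist : listChromNum (K.overFin rfl) ≤ 3 :=
    listChromNum_congr e ▸ listChromNum_completeBipartiteGraph_le
  have hthreshold : 2 * (k + 1) < lcfThreshold (K.overFin rfl) := by
    apply lt_lcfThreshold_of_listColorFunction_ne
    rw [← listColorFunction_congr e, ← chromPoly_congr e]
    exact ht.ne
  rify at hlist hthreshold
  linarith
end

section
/- Let n, m, t ∈ ℕ with n ≥ 2 and m ≥ n + 1, and let G = K_{n, n^n t} with bipartition X = {x_1, …, x_n}, Y = {y_1, …, y_{n^n t}}. Let S_k = {m + n(k−2) + ℓ : ℓ ∈ [n]} for each k ∈ [n], and let A = {{s_1, …, s_n} : s_k ∈ S_k for each k ∈ [n]}, enumerated as A = {A_0, …, A_{n^n − 1}}. Let L be the m-assignment for G defined by L(x_k) = [m−n] ∪ S_k for each k ∈ [n] and L(y_k) = [m−n] ∪ A_{⌊(k−1)/t⌋} for each k ∈ [n^n t]. Then P(G, L) = n^n · ∏_{i=0}^{n} (m−i)^{t·C(n,i)·(n−1)^{n−i}} + Σ_{N=1}^{n} Σ_{S=0}^{n−N} [ n^S · C(n,S)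 · C(m−n,N) · ( Σ_{i=0}^{N−1} (−1)^i · C(N,i) · (N−i)^{n−S} ) · ∏_{i=0}^{S} (m−N−i)^{t·C(S,i)·(n−1)^{S−i}·n^{n−S}} ], where C(a,b) denotes the binomial coefficient (interpreted as 0 when a < b). -/
/-- The complete bipartite graph `K_{n,l}`. -/
def Knl (n l : ℕ) : SimpleGraph (Fin n ⊕ Fin l) := completeBipartiteGraph (Fin n) (Fin l)

/-- `S_k = {m + n(k-2) + ℓ : ℓ ∈ [n]}` (written as `{(m-n) + n(k-1) + ℓ : ℓ ∈ [n]}`,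
which is the same set for `k ≥ 1` and `m ≥ n`). -/
def Sset (n m k : ℕ) : Finset ℕ :=
  (Finset.Icc 1 n).image fun ℓ => (m - n) + n * (k - 1) + ℓ

/-- `A`, the collection of all transversals `{s_1, …, s_n}` with `s_k ∈ S_k` for each
`k ∈ [n]`. -/
def transversalFamily (n m : ℕ) : Set (Finset ℕ) :=
  {T | ∃ s : Fin n → ℕ, (∀ k : Fin n, s k ∈ Sset n m (k.val + 1)) ∧ T = Finset.image s Finset.univ}

/-!
Color `X` first, by `g`. If `g` uses `N` colors of the common core `C = [m - n]`, and a vertex `y`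
carries the transversal `s`, then `y` is left with `m - N - i` colors, where `i` is the number of
`k` with `g x_k = s k`. So the number of extensions of `g` to `Y` depends only on `N` and on the
number `R` of vertices `x_k` colored from their own `S_k`: the transversals agreeing with `g` in
exactly `i` places are counted by the coefficient of `z ^ i` in
`∏ k, ∑ c ∈ S k, z ^ [c = g x_k] = (z + (q - 1)) ^ R * q ^ (n - R)` with `q = |S k|`.
Inclusion-exclusion counts the colorings `g` with given `N` and `R`.
-/

open Finset
open scoped Function

section Counting

theorem prod_ite_const_eq_pow_mul_pow {ι M : Type*} [Fintype ι] [CommMonoid M]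
    (P : ι → Prop) [DecidablePred P] (a b : M) :
    ∏ k, (if P k then a else b) = a ^ #{k | P k} * b ^ (Fintype.card ι - #{k | P k}) := by
  classical
  rw [prod_ite, prod_const, prod_const, ← compl_filter, card_compl]

theorem prod_eq_prod_pow_of_card_fiber_eq {κ β M : Type*} [Fintype κ] [DecidableEq β]
    [CommMonoid M] {τ : κ → β} {P : Finset β} {t : ℕ} (hτ : ∀ j, τ j ∈ P)
    (hfiber : ∀ s ∈ P, #{j | τ j = s} = t) (F : β → M) :
    ∏ j, F (τ j) = ∏ s ∈ P, F s ^ t := by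
  rw [← prod_fiberwise_of_maps_to' fun j _ => hτ j]
  exact prod_congr rfl fun s hs => by rw [prod_const, hfiber s hs]

theorem card_filter_fin_mul_div_eq {a i : ℕ} (t : ℕ) (hi : i < a) :
    #{j : Fin (a * t) | j.val / t = i} = t := by
  rcases t.eq_zero_or_pos with rfl | ht
  · simp
  have hle : (i + 1) * t ≤ a * t := Nat.mul_le_mul_right t hi
  have hval : ({j : Fin (a * t) | j.val / t = i} : Finset _).map Fin.valEmbedding =
      Ico (i * t) ((i + 1) * t) := by
    ext x
    simp only [mem_map, mem_filter, mem_univ, true_and, Fin.valEmbedding_apply, mem_Ico,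
      Nat.div_eq_iff ht, Fin.exists_iff, add_one_mul] at hle ⊢
    grind
  rw [← card_map, hval, Nat.card_Ico, ← Nat.sub_mul, Nat.add_sub_cancel_left, one_mul]

theorem card_filter_eq_sum_powerset_neg_one_pow {α β : Type*} [DecidableEq β]
    (P : Finset α) (h : α → Finset β) (D : Finset β) :
    (#{a ∈ P | h a = D} : ℤ) = ∑ U ∈ D.powerset, (-1) ^ #U * (#{a ∈ P | h a ⊆ D \ U} : ℤ) := by
  have hsum (a : α) : ∑ U ∈ D.powerset, (if h a ⊆ D \ U then (-1 : ℤ) ^ #U else 0) =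
      if h a = D then 1 else 0 := by
    by_cases hD : h a ⊆ D
    · have hU : {U ∈ D.powerset | h a ⊆ D \ U} = (D \ h a).powerset := by
        ext U
        simp only [mem_filter, mem_powerset, subset_sdiff, hD, true_and, disjoint_comm]
      rw [← sum_filter, hU, sum_powerset_neg_one_pow_card]
      simp only [sdiff_eq_empty_iff_subset, subset_antisymm_iff (a := h a), hD, true_and]
    · rw [if_neg fun e => hD e.subset]
      exact sum_eq_zero fun U _ => if_neg fun e => hD (e.trans sdiff_subset)
  simp only [card_filter, Nat.cast_sum, Nat.cast_ite, Nat.cast_one, Nat.cast_zero, mul_sum, mul_ite,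
    mul_one, mul_zero]
  rw [sum_comm]
  exact (sum_congr rfl fun a _ => hsum a).symm

/-- The inclusion-exclusion expression for the number of surjections from an `r`-element set onto
an `N`-element set. The term `i = N` vanishes unless `r = 0`; it is kept so that
`surjCount 0 0 = 1`. -/
def surjCount (N r : ℕ) : ℤ :=
  ∑ i ∈ range (N + 1), (-1 : ℤ) ^ i * (N.choose i : ℤ) * ((N : ℤ) - (i : ℤ)) ^ r

theorem surjCount_zero_left (r : ℕ) : surjCount 0 r = if r = 0 then 1 else 0 := by
  simp [surjCount, zero_pow_eq]

theorem surjCount_eq_sum_range {N r : ℕ} (hr : r ≠ 0) :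
    surjCount N r =
      ∑ i ∈ range N, (-1 : ℤ) ^ i * (N.choose i : ℤ) * ((N : ℤ) - (i : ℤ)) ^ r := by
  simp [surjCount, sum_range_succ, hr]

end Counting

theorem numListColorings_completeBipartiteGraph_s3 {ι κ : Type*} [Fintype ι] [DecidableEq ι]
    [Fintype κ] (L : ι ⊕ κ → Finset ℕ) :
    numListColorings (completeBipartiteGraph ι κ) L =
      ∑ g ∈ Fintype.piFinset fun k => L (Sum.inl k), ∏ j, #(L (Sum.inr j) \ univ.image g) := by
  classical
  let split := (Equiv.sumArrowEquivProdArrow ι κ ℕ).trans (Equiv.sigmaEquivProd _ _).symm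
  let W : Finset (Σ _ : ι → ℕ, κ → ℕ) :=
    (Fintype.piFinset fun k => L (Sum.inl k)).sigma fun g =>
      Fintype.piFinset fun j => L (Sum.inr j) \ univ.image g
  have hW : {f | IsProperListColoring (completeBipartiteGraph ι κ) L f} = split ⁻¹' W := by
    ext f
    have hsplit : split f = ⟨f ∘ Sum.inl, f ∘ Sum.inr⟩ := rfl
    simp only [Set.mem_ofPred_eq, Set.mem_preimage, mem_coe, hsplit, W, mem_sigma,
      Fintype.mem_piFinset, mem_sdiff, mem_image, mem_univ, true_and, Function.comp_apply,
      IsProperListColoring, completeBipartiteGraph, Sum.forall]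
    grind
  rw [numListColorings, hW, Set.ncard_preimage_of_injective_subset_range split.injective (by simp),
    Set.ncard_coe_finset, card_sigma]
  simp only [Fintype.card_piFinset]

section Transversals

variable {ι α : Type*} {S : ι → Finset α}

theorem injective_of_mem_of_pairwise_disjoint (hS : Pairwise (Disjoint on S)) {s : ι → α}
    (hs : ∀ k, s k ∈ S k) : Function.Injective s :=
  fun k k' h => hS.eq (not_disjoint_iff.2 ⟨s k, hs k, h ▸ hs k'⟩)

variable [Fintype ι] [DecidableEq ι] [DecidableEq α]

theorem injOn_image_univ_piFinset (hS : Pairwise (Disjoint on S)) :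
    Set.InjOn (fun s : ι → α => univ.image s) (Fintype.piFinset S) := by
  intro s hs s' hs' h
  simp only [mem_coe, Fintype.mem_piFinset] at hs hs'
  funext k
  have hk : s k ∈ univ.image s' := h.subset (mem_image_of_mem s (mem_univ k))
  obtain ⟨k', -, hk'⟩ := mem_image.1 hk
  obtain rfl : k' = k := hS.eq (not_disjoint_iff.2 ⟨s k, hk' ▸ hs' k', hs k⟩)
  exact hk'.symm

theorem exists_transversals_of_bijOn (hS : Pairwise (Disjoint on S)) {a : ℕ} (t : ℕ)
    {A : ℕ → Finset α}
    (hA : Set.BijOn A (Set.Iio a) ((fun s => univ.image s) '' (Fintype.piFinset S : Set (ι → α)))) :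
    ∃ τ : Fin (a * t) → ι → α, (∀ j, τ j ∈ Fintype.piFinset S) ∧
      (∀ j, univ.image (τ j) = A (j.val / t)) ∧
      ∀ s ∈ Fintype.piFinset S, #{j | τ j = s} = t := by
  have hlt (j : Fin (a * t)) : j.val / t < a := Nat.div_lt_of_lt_mul (mul_comm a t ▸ j.isLt)
  choose τ hτ hτA using fun j => hA.mapsTo (hlt j)
  refine ⟨τ, hτ, hτA, fun s hs => ?_⟩
  obtain ⟨i, hi, his⟩ := hA.surjOn ⟨s, hs, rfl⟩
  have hiff (j : Fin (a * t)) : τ j = s ↔ j.val / t = i := by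
    rw [← hA.injOn.eq_iff (hlt j) hi, ← hτA, his]
    exact ((injOn_image_univ_piFinset hS).eq_iff (hτ j) hs).symm
  simp only [hiff, card_filter_fin_mul_div_eq t hi]

end Transversals

section SharedPrivate

variable {ι α : Type*} [Fintype ι] [DecidableEq α]

/-- The colors of the common core `C` that are used by the coloring `g`. -/
def sharedColors (C : Finset α) (g : ι → α) : Finset α := C ∩ univ.image g

/-- The vertices `k` that the coloring `g` colors from their own set `S k`, rather than from the
core that is common to all lists. -/
def privateVertices (S : ι → Finset α) (g : ι → α) : Finset ι := {k | g k ∈ S k}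

variable {C : Finset α} {S : ι → Finset α} {q : ℕ}

theorem card_sharedColors_add_card_privateVertices_le (hC : ∀ k, Disjoint C (S k)) (g : ι → α) :
    #(sharedColors C g) + #(privateVertices S g) ≤ Fintype.card ι := by
  have hsub : sharedColors C g ⊆ image g {k | g k ∉ S k} := by
    intro x hx
    obtain ⟨hxC, hxg⟩ := mem_inter.1 hx
    obtain ⟨k, hk, rfl⟩ := mem_image.1 hxg
    exact mem_image_of_mem g (mem_filter.2 ⟨hk, disjoint_left.1 (hC k) hxC⟩)
  calc #(sharedColors C g) + #(privateVertices S g)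
      ≤ #{k | g k ∉ S k} + #(privateVertices S g) := by
        gcongr
        exact (card_le_card hsub).trans card_image_le
    _ = Fintype.card ι := by
        rw [add_comm, privateVertices, card_filter_add_card_filter_not, card_univ]

theorem card_union_image_sdiff_image (hC : ∀ k, Disjoint C (S k))
    (hS : Pairwise (Disjoint on S)) {g s : ι → α} (hg : ∀ k, g k ∈ C ∪ S k)
    (hs : ∀ k, s k ∈ S k) :
    (#((C ∪ univ.image s) \ univ.image g) : ℤ) =
      #C + Fintype.card ι - #(sharedColors C g) - #{k | s k = g k} := by
  have hinj := injective_of_mem_of_pairwise_disjoint hS hs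
  have hsC (k : ι) : s k ∉ C := disjoint_right.1 (hC k) (hs k)
  have hdisj : Disjoint C (univ.image s) := by
    simpa only [disjoint_right, forall_mem_image, mem_univ, forall_const] using hsC
  have hagree : univ.image s ∩ univ.image g = image s {k | s k = g k} := by
    ext x
    simp only [mem_inter, mem_image, mem_univ, true_and, mem_filter]
    constructor
    · rintro ⟨⟨k, rfl⟩, k', hk'⟩
      have hgS : g k' ∈ S k' := (mem_union.1 (hg k')).resolve_left (hk' ▸ hsC k)
      obtain rfl : k' = k := hS.eq (not_disjoint_iff.2 ⟨g k', hgS, hk' ▸ hs k⟩)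
      exact ⟨k', hk'.symm, rfl⟩
    · rintro ⟨k, hk, rfl⟩
      exact ⟨⟨k, rfl⟩, k, hk.symm⟩
  have hcard := card_sdiff_add_card_inter (C ∪ univ.image s) (univ.image g)
  rw [union_inter_distrib_right, card_union_of_disjoint hdisj,
    card_union_of_disjoint (hdisj.mono inter_subset_left inter_subset_left), hagree,
    card_image_of_injective _ hinj, card_image_of_injective _ hinj, card_univ] at hcard
  rw [sharedColors]
  omega

variable [DecidableEq ι]

open Polynomial in
theorem sum_piFinset_X_pow_card_agree (hq : ∀ k, #(S k) = q) (g : ι → α) :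
    ∑ s ∈ Fintype.piFinset S, (X : ℕ[X]) ^ #{k | s k = g k} =
      (X + Polynomial.C (q - 1)) ^ #(privateVertices S g) *
        Polynomial.C (q ^ (Fintype.card ι - #(privateVertices S g))) := by
  have hfactor (k : ι) : ∑ x ∈ S k, (if x = g k then (X : ℕ[X]) else 1) =
      if g k ∈ S k then X + Polynomial.C (q - 1) else Polynomial.C q := by
    split_ifs with hk
    · rw [← add_sum_erase _ _ hk, if_pos rfl,
        sum_congr rfl fun x hx => if_neg (ne_of_mem_erase hx)]
      simp [card_erase_of_mem hk, hq]
    · rw [sum_congr rfl fun x hx => if_neg (ne_of_mem_of_not_mem hx hk)]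
      simp [hq]
  calc ∑ s ∈ Fintype.piFinset S, (X : ℕ[X]) ^ #{k | s k = g k}
      = ∑ s ∈ Fintype.piFinset S, ∏ k, if s k = g k then (X : ℕ[X]) else 1 := by
        simp only [prod_ite_const_eq_pow_mul_pow, one_pow, mul_one]
    _ = ∏ k, ∑ x ∈ S k, if x = g k then (X : ℕ[X]) else 1 :=
        (prod_univ_sum S fun k x => if x = g k then (X : ℕ[X]) else 1).symm
    _ = (X + Polynomial.C (q - 1)) ^ #(privateVertices S g) *
          Polynomial.C (q ^ (Fintype.card ι - #(privateVertices S g))) := by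
        simp only [hfactor, prod_ite_const_eq_pow_mul_pow, C_pow, privateVertices]

theorem card_filter_piFinset_card_agree_eq (hq : ∀ k, #(S k) = q) (g : ι → α) (i : ℕ) :
    #{s ∈ Fintype.piFinset S | #{k | s k = g k} = i} =
      (#(privateVertices S g)).choose i * (q - 1) ^ (#(privateVertices S g) - i) *
        q ^ (Fintype.card ι - #(privateVertices S g)) := by
  have hcoeff := congrArg (Polynomial.coeff · i) (sum_piFinset_X_pow_card_agree hq g)
  simp only [Polynomial.finsetSum_coeff, Polynomial.coeff_X_pow, Polynomial.coeff_mul_C,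
    Polynomial.coeff_X_add_C_pow, Nat.cast_id] at hcoeff
  rw [card_filter, mul_comm (Nat.choose _ _), ← hcoeff]
  simp only [eq_comm]

theorem prod_piFinset_card_agree {M : Type*} [CommMonoid M] (hq : ∀ k, #(S k) = q) (g : ι → α)
    (F : ℕ → M) :
    ∏ s ∈ Fintype.piFinset S, F #{k | s k = g k} =
      ∏ i ∈ range (#(privateVertices S g) + 1),
        F i ^ ((#(privateVertices S g)).choose i * (q - 1) ^ (#(privateVertices S g) - i) *
          q ^ (Fintype.card ι - #(privateVertices S g))) := by
  have hmaps : ∀ s ∈ Fintype.piFinset S,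
      #{k | s k = g k} ∈ range (#(privateVertices S g) + 1) := by
    intro s hs
    rw [Fintype.mem_piFinset] at hs
    refine mem_range_succ_iff.2 (card_le_card (monotone_filter_right _ fun k _ hk => ?_))
    exact hk ▸ hs k
  rw [← prod_fiberwise_of_maps_to' hmaps]
  simp only [prod_const, card_filter_piFinset_card_agree_eq hq]

theorem card_filter_privateVertices_eq_sharedColors_subset (hC : ∀ k, Disjoint C (S k))
    (hq : ∀ k, #(S k) = q) (B : Finset ι) {T : Finset α} (hT : T ⊆ C) :
    #{g ∈ Fintype.piFinset fun k => C ∪ S k | privateVertices S g = B ∧ sharedColors C g ⊆ T} =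
      q ^ #B * #T ^ (Fintype.card ι - #B) := by
  have hpi : {g ∈ Fintype.piFinset fun k => C ∪ S k |
        privateVertices S g = B ∧ sharedColors C g ⊆ T} =
      Fintype.piFinset fun k => if k ∈ B then S k else T := by
    ext g
    have hsub : sharedColors C g ⊆ T ↔ ∀ k, g k ∈ C → g k ∈ T := by
      simp only [sharedColors, subset_iff, mem_inter, mem_image, mem_univ, true_and]
      grind
    simp only [mem_filter, Fintype.mem_piFinset, hsub, privateVertices, Finset.ext_iff, mem_univ,
      true_and, mem_union, ← forall_and]
    refine forall_congr' fun k => ?_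
    have hCS : g k ∈ C → g k ∉ S k := fun h => disjoint_left.1 (hC k) h
    have hTC : g k ∈ T → g k ∈ C := fun h => hT h
    grind
  rw [hpi, Fintype.card_piFinset]
  simp only [apply_ite card, hq, prod_ite_const_eq_pow_mul_pow, filter_univ_mem]

theorem card_filter_privateVertices_eq_sharedColors_eq (hC : ∀ k, Disjoint C (S k))
    (hq : ∀ k, #(S k) = q) (B : Finset ι) {D : Finset α} (hD : D ⊆ C) :
    (#{g ∈ Fintype.piFinset fun k => C ∪ S k |
        privateVertices S g = B ∧ sharedColors C g = D} : ℤ) =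
      q ^ #B * surjCount #D (Fintype.card ι - #B) := by
  have hsub : ∀ U ∈ D.powerset, (#{g ∈ Fintype.piFinset fun k => C ∪ S k |
        privateVertices S g = B ∧ sharedColors C g ⊆ D \ U} : ℤ) =
      q ^ #B * ((#D : ℤ) - #U) ^ (Fintype.card ι - #B) := by
    intro U hU
    rw [mem_powerset] at hU
    rw [card_filter_privateVertices_eq_sharedColors_subset hC hq B (sdiff_subset.trans hD),
      card_sdiff_of_subset hU, Nat.cast_mul, Nat.cast_pow, Nat.cast_pow,
      Nat.cast_sub (card_le_card hU)]
  simp only [← filter_filter] at hsub ⊢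
  rw [card_filter_eq_sum_powerset_neg_one_pow, sum_congr rfl fun U hU => by rw [hsub U hU],
    sum_powerset_apply_card fun i =>
      (-1 : ℤ) ^ i * (q ^ #B * ((#D : ℤ) - i) ^ (Fintype.card ι - #B)), surjCount, mul_sum]
  refine sum_congr rfl fun i _ => ?_
  rw [nsmul_eq_mul]
  ring

theorem card_filter_card_sharedColors_card_privateVertices (hC : ∀ k, Disjoint C (S k))
    (hq : ∀ k, #(S k) = q) (N R : ℕ) :
    (#{g ∈ Fintype.piFinset fun k => C ∪ S k |
        #(sharedColors C g) = N ∧ #(privateVertices S g) = R} : ℤ) =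
      q ^ R * (Fintype.card ι).choose R * (#C).choose N * surjCount N (Fintype.card ι - R) := by
  set P := {g ∈ Fintype.piFinset fun k => C ∪ S k |
    #(sharedColors C g) = N ∧ #(privateVertices S g) = R} with hP
  have hmaps : ∀ g ∈ P,
      (privateVertices S g, sharedColors C g) ∈ powersetCard R univ ×ˢ powersetCard N C := by
    intro g hg
    obtain ⟨-, hN, hR⟩ := mem_filter.1 hg
    exact mem_product.2 ⟨mem_powersetCard.2 ⟨subset_univ _, hR⟩,
      mem_powersetCard.2 ⟨inter_subset_left, hN⟩⟩
  have hfiber : ∀ BD ∈ powersetCard R (univ : Finset ι) ×ˢ powersetCard N C,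
      (#{g ∈ P | (privateVertices S g, sharedColors C g) = BD} : ℤ) =
        q ^ R * surjCount N (Fintype.card ι - R) := by
    rintro ⟨B, D⟩ hBD
    simp only [mem_product, mem_powersetCard, subset_univ, true_and] at hBD
    obtain ⟨rfl, hD, rfl⟩ := hBD
    rw [← card_filter_privateVertices_eq_sharedColors_eq hC hq B hD, hP, filter_filter]
    congr 2
    ext g
    grind
  rw [card_eq_sum_card_fiberwise hmaps, Nat.cast_sum, sum_congr rfl hfiber, sum_const,
    card_product, card_powersetCard, card_powersetCard, card_univ, nsmul_eq_mul]
  push_cast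
  ring

theorem sum_card_sharedColors_card_privateVertices (hC : ∀ k, Disjoint C (S k))
    (hq : ∀ k, #(S k) = q) (F : ℕ → ℕ → ℤ) :
    ∑ g ∈ Fintype.piFinset fun k => C ∪ S k, F #(sharedColors C g) #(privateVertices S g) =
      ∑ N ∈ Icc 0 (Fintype.card ι), ∑ R ∈ Icc 0 (Fintype.card ι - N),
        q ^ R * (Fintype.card ι).choose R * (#C).choose N *
          surjCount N (Fintype.card ι - R) * F N R := by
  have hmaps : ∀ g ∈ Fintype.piFinset fun k => C ∪ S k,
      (⟨#(sharedColors C g), #(privateVertices S g)⟩ : Σ _ : ℕ, ℕ) ∈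
        (Icc 0 (Fintype.card ι)).sigma fun N => Icc 0 (Fintype.card ι - N) := by
    intro g _
    have hle := card_sharedColors_add_card_privateVertices_le hC g
    simp only [mem_sigma, mem_Icc]
    omega
  rw [sum_sigma', ← sum_fiberwise_of_maps_to' hmaps fun NR => F NR.1 NR.2]
  refine sum_congr rfl fun NR _ => ?_
  rw [sum_const, nsmul_eq_mul, ← card_filter_card_sharedColors_card_privateVertices hC hq]
  simp only [Sigma.ext_iff, heq_eq_eq]

end SharedPrivate

theorem sum_choose_mul_surjCount (n p q : ℕ) (F : ℕ → ℕ → ℤ) :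
    ∑ N ∈ Icc 0 n, ∑ R ∈ Icc 0 (n - N),
        (q : ℤ) ^ R * n.choose R * p.choose N * surjCount N (n - R) * F N R =
      (q : ℤ) ^ n * F 0 n +
        ∑ N ∈ Icc 1 n, ∑ R ∈ Icc 0 (n - N),
          (q : ℤ) ^ R * (n.choose R : ℤ) * (p.choose N : ℤ) *
            (∑ i ∈ range N, (-1 : ℤ) ^ i * (N.choose i : ℤ) * ((N : ℤ) - (i : ℤ)) ^ (n - R)) *
            F N R := by
  rw [← add_sum_Ioc_eq_sum_Icc n.zero_le, ← Icc_add_one_left_eq_Ioc, zero_add]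
  congr 1
  · rw [sum_eq_single_of_mem n (by simp)]
    · simp [surjCount_zero_left]
    · intro R hR hRn
      have hne : n - R ≠ 0 := by grind
      simp [surjCount_zero_left, hne]
  · refine sum_congr rfl fun N hN => sum_congr rfl fun R hR => ?_
    have hne : n - R ≠ 0 := by grind
    rw [surjCount_eq_sum_range hne]

theorem numListColorings_Knl_transversal_assignment_general {ι κ : Type*} [Fintype ι]
    [DecidableEq ι] [Fintype κ] {C : Finset ℕ} {S : ι → Finset ℕ} {q t : ℕ}
    (hC : ∀ k, Disjoint C (S k)) (hS : Pairwise (Disjoint on S)) (hq : ∀ k, #(S k) = q)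
    {τ : κ → ι → ℕ} (hτ : ∀ j, τ j ∈ Fintype.piFinset S)
    (hfiber : ∀ s ∈ Fintype.piFinset S, #{j | τ j = s} = t) {L : ι ⊕ κ → Finset ℕ}
    (hLx : ∀ k, L (Sum.inl k) = C ∪ S k) (hLy : ∀ j, L (Sum.inr j) = C ∪ univ.image (τ j))
    {n m : ℕ} (hn : Fintype.card ι = n) (hm : #C + n = m) :
    (numListColorings (completeBipartiteGraph ι κ) L : ℤ) =
      (q : ℤ) ^ n *
        ∏ i ∈ range (n + 1), ((m : ℤ) - (i : ℤ)) ^ (t * n.choose i * (q - 1) ^ (n - i)) +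
      ∑ N ∈ Icc 1 n, ∑ R ∈ Icc 0 (n - N),
        (q : ℤ) ^ R * (n.choose R : ℤ) * ((#C).choose N : ℤ) *
          (∑ i ∈ range N, (-1 : ℤ) ^ i * (N.choose i : ℤ) * ((N : ℤ) - (i : ℤ)) ^ (n - R)) *
          ∏ i ∈ range (R + 1),
            ((m : ℤ) - (N : ℤ) - (i : ℤ)) ^ (t * R.choose i * (q - 1) ^ (R - i) * q ^ (n - R)) := by
  subst hn hm
  let F (N R : ℕ) : ℤ := ∏ i ∈ range (R + 1), (((#C + Fintype.card ι : ℕ) : ℤ) - N - i) ^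
    (t * R.choose i * (q - 1) ^ (R - i) * q ^ (Fintype.card ι - R))
  have hext : ∀ g ∈ Fintype.piFinset fun k => C ∪ S k,
      ∏ j, (#((C ∪ univ.image (τ j)) \ univ.image g) : ℤ) =
        F #(sharedColors C g) #(privateVertices S g) := by
    intro g hg
    rw [prod_congr rfl fun j _ => card_union_image_sdiff_image hC hS (Fintype.mem_piFinset.1 hg)
        (Fintype.mem_piFinset.1 (hτ j)),
      prod_eq_prod_pow_of_card_fiber_eq hτ hfiber fun s =>
        (#C + Fintype.card ι - #(sharedColors C g) - #{k | s k = g k} : ℤ),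
      prod_piFinset_card_agree hq g fun i =>
        (#C + Fintype.card ι - #(sharedColors C g) - i : ℤ) ^ t]
    simp only [F, ← pow_mul, mul_assoc, Nat.cast_add]
  rw [numListColorings_completeBipartiteGraph_s3, Nat.cast_sum]
  simp only [Nat.cast_prod, hLx, hLy]
  rw [sum_congr rfl hext, sum_card_sharedColors_card_privateVertices hC hq,
    sum_choose_mul_surjCount]
  simp [F]

section Sset

variable (n m : ℕ)

theorem Sset_add_one_eq_Ioc (k : ℕ) :
    Sset n m (k + 1) = Ioc (m - n + n * k) (m - n + n * (k + 1)) := by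
  rw [Sset, Nat.add_sub_cancel, image_add_left_Icc, Nat.mul_succ, ← Nat.add_assoc,
    Icc_add_one_left_eq_Ioc]

theorem card_Sset_add_one (k : ℕ) : #(Sset n m (k + 1)) = n := by
  rw [Sset_add_one_eq_Ioc, Nat.card_Ioc, Nat.mul_succ]
  omega

theorem disjoint_Icc_Sset_add_one (k : ℕ) : Disjoint (Icc 1 (m - n)) (Sset n m (k + 1)) := by
  rw [Sset_add_one_eq_Ioc, disjoint_left]
  grind

theorem pairwise_disjoint_Sset_add_one :
    Pairwise (Disjoint on fun k : Fin n => Sset n m (k.val + 1)) := by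
  have hmono : Monotone fun k : ℕ => m - n + n * k := fun _ _ h => by dsimp only; gcongr
  intro k k' hk
  simpa only [Function.onFun, Sset_add_one_eq_Ioc, ← disjoint_coe, coe_Ioc]
    using! hmono.pairwise_disjoint_on_Ioc_succ (Fin.val_injective.ne hk)

theorem transversalFamily_eq_image :
    transversalFamily n m = (fun s => univ.image s) ''
      (Fintype.piFinset fun k : Fin n => Sset n m (k.val + 1) : Set (Fin n → ℕ)) := by
  ext T
  simp only [transversalFamily, Set.mem_ofPred_eq, Set.mem_image, mem_coe, Fintype.mem_piFinset,
    eq_comm]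

end Sset

/-- Lemma 2 of the paper: the exact count of proper `L`-colorings of `K_{n, nⁿt}` for
the particular `m`-assignment `L` built from an enumeration `A_0, …, A_{nⁿ-1}` of the
transversal family, with `L(x_k) = [m-n] ∪ S_k` and `L(y_k) = [m-n] ∪ A_{⌊(k-1)/t⌋}`. -/
theorem numListColorings_Knl_transversal_assignment
    (n m t : ℕ) (hn : 2 ≤ n) (hm : n + 1 ≤ m) (ht : 1 ≤ t)
    (A : ℕ → Finset ℕ)
    (hAinj : Set.InjOn A (Set.Iio (n ^ n)))
    (hAmem : ∀ j < n ^ n, A j ∈ transversalFamily n m)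
    (hAsurj : ∀ T ∈ transversalFamily n m, ∃ j < n ^ n, A j = T)
    (L : Fin n ⊕ Fin (n ^ n * t) → Finset ℕ)
    (hLx : ∀ k : Fin n, L (Sum.inl k) = Finset.Icc 1 (m - n) ∪ Sset n m (k.val + 1))
    (hLy : ∀ j : Fin (n ^ n * t), L (Sum.inr j) = Finset.Icc 1 (m - n) ∪ A (j.val / t)) :
    (numListColorings (Knl n (n ^ n * t)) L : ℤ) =
      (n : ℤ) ^ n *
        ∏ i ∈ Finset.range (n + 1),
          ((m : ℤ) - (i : ℤ)) ^ (t * n.choose i * (n - 1) ^ (n - i)) +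
      ∑ N ∈ Finset.Icc 1 n, ∑ S ∈ Finset.Icc 0 (n - N),
        (n : ℤ) ^ S * (n.choose S : ℤ) * ((m - n).choose N : ℤ) *
          (∑ i ∈ Finset.range N, (-1 : ℤ) ^ i * (N.choose i : ℤ) * ((N : ℤ) - (i : ℤ)) ^ (n - S)) *
          ∏ i ∈ Finset.range (S + 1),
            ((m : ℤ) - (N : ℤ) - (i : ℤ)) ^ (t * S.choose i * (n - 1) ^ (S - i) * n ^ (n - S)) := by
  have hA : Set.BijOn A (Set.Iio (n ^ n)) (transversalFamily n m) := ⟨hAmem, hAinj, hAsurj⟩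
  rw [transversalFamily_eq_image] at hA
  have hS := pairwise_disjoint_Sset_add_one n m
  obtain ⟨τ, hτ, hτA, hfiber⟩ := exists_transversals_of_bijOn hS t hA
  have hcore : #(Icc 1 (m - n)) = m - n := Nat.card_Icc 1 (m - n)
  simpa only [hcore, Knl] using numListColorings_Knl_transversal_assignment_general
    (fun k : Fin n => disjoint_Icc_Sset_add_one n m k) hS (fun k => card_Sset_add_one n m k) hτ
    hfiber hLx (fun j => by rw [hLy, hτA]) (Fintype.card_fin n) (by omega)
end
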